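/- (Corollary A.8, point 2: global-minimum correspondence between the measure problem and the moment problem.) Let p be a real polynomial in D variables of total degree at most d, L ≥ 1, and let ν = Σ_{l=1}^L ν_1^{(l)} ⊗ ⋯ ⊗ ν_D^{(l)} ∈ S_L, where each ν_i^{(l)} is a finite positive Borel measure on ℝ with ν_i^{(l)}(ℝ ∖ [-1,1]) = 0 and ν([-1,1]^D) = 1. Define the moments μ_{i,k}^{(l)} = ∫ x^k dν_i^{(l)}(x) for 0 ≤ k ≤ 2d. Then ∫ p dν attains the infimum of ∫ p dρ over ρ ∈ S_L if and only if the tuple (μ_i^{(l)}) attains the infimum of the objective f(μ) = Σ_{|n|≤d} p_n Σ_{l=1}^L ∏_{i=1}^D μ_{i,n_i}^{(l)} over the feasible set F_L. -/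

import Mathlib

open MeasureTheory

/-- The degree-`d` moment matrix `𝓜_d(μ)` with entries `μ (m+n)`. -/
noncomputable def momentMatrix (d : ℕ) (μ : ℕ → ℝ) : Matrix (Fin (d+1)) (Fin (d+1)) ℝ :=
  fun m n => μ (m.1 + n.1)

/-- The localized moment matrix `𝓜_{d-1}(μ; 1 - x²)` with entries `μ (m+n) - μ (m+n+2)`. -/
noncomputable def locMomentMatrix (d : ℕ) (μ : ℕ → ℝ) : Matrix (Fin d) (Fin d) ℝ :=
  fun m n => μ (m.1 + n.1) - μ (m.1 + n.1 + 2)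

/-- The feasible set `F_L`: all the moment matrices `𝓜_d(μ_i^{(l)})` and
`𝓜_{d-1}(μ_i^{(l)}; 1-x²)` are PSD and `Σ_l ∏_i μ_{i,0}^{(l)} = 1`. -/
def Feasible (D d L : ℕ) (μ : Fin L → Fin D → ℕ → ℝ) : Prop :=
  (∀ l i, (momentMatrix d (μ l i)).PosSemidef) ∧
  (∀ l i, (locMomentMatrix d (μ l i)).PosSemidef) ∧
  (∑ l, ∏ i, μ l i 0) = 1

/-- The hypercube `[-1,1]^D` in `ℝ^D`. -/
def cube (D : ℕ) : Set (Fin D → ℝ) := Set.univ.pi fun _ => Set.Icc (-1) 1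

/-- The reformulated objective `f(μ) = Σ_n p_n Σ_l ∏_i μ_{i,n_i}^{(l)}`. -/
noncomputable def objective (D L : ℕ) (p : MvPolynomial (Fin D) ℝ)
    (μ : Fin L → Fin D → ℕ → ℝ) : ℝ :=
  ∑ n ∈ p.support, p.coeff n * ∑ l, ∏ i, μ l i (n i)

open Polynomial

/-- The generators of the degree-`2k` truncated quadratic module of `[-1,1]`: squares `g²` with
`deg g ≤ k`, and weighted squares `(1 - x²) g²` with `deg g ≤ k - 1`. -/
noncomputable def weightedSquares (k : ℕ) : Set ℝ[X] :=
  {q | ∃ g : ℝ[X], g.natDegree ≤ k ∧ q = g ^ 2} ∪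
    {q | ∃ g : ℝ[X], g.natDegree + 1 ≤ k ∧ q = (1 - X ^ 2) * g ^ 2}

/-- Sums of weighted squares of degree at most `2k`. -/
noncomputable def truncatedModule (k : ℕ) : AddSubmonoid ℝ[X] :=
  AddSubmonoid.closure (weightedSquares k)

theorem weightedSquares_mono {k m : ℕ} (h : k ≤ m) : weightedSquares k ⊆ weightedSquares m := by
  rintro q (⟨g, hg, rfl⟩ | ⟨g, hg, rfl⟩)
  · exact Or.inl ⟨g, hg.trans h, rfl⟩
  · exact Or.inr ⟨g, hg.trans h, rfl⟩

theorem truncatedModule_mono {k m : ℕ} (h : k ≤ m) : truncatedModule k ≤ truncatedModule m :=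
  AddSubmonoid.closure_mono (weightedSquares_mono h)

theorem weightedSquares_mul_mem {k m : ℕ} {p q : ℝ[X]} (hp : p ∈ weightedSquares k)
    (hq : q ∈ weightedSquares m) : p * q ∈ weightedSquares (k + m) := by
  have hw : (1 - X ^ 2 : ℝ[X]).natDegree ≤ 2 := by compute_degree
  obtain ⟨g, hg, rfl⟩ | ⟨g, hg, rfl⟩ := hp <;> obtain ⟨h, hh, rfl⟩ | ⟨h, hh, rfl⟩ := hq
  all_goals have hgh := natDegree_mul_le (p := g) (q := h)
  · exact Or.inl ⟨g * h, by omega, by ring⟩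
  · exact Or.inr ⟨g * h, by omega, by ring⟩
  · exact Or.inr ⟨g * h, by omega, by ring⟩
  · have := natDegree_mul_le (p := (1 - X ^ 2 : ℝ[X])) (q := g * h)
    exact Or.inl ⟨(1 - X ^ 2) * (g * h), by omega, by ring⟩

open scoped Pointwise in
theorem truncatedModule_mul_mem {k m : ℕ} {p q : ℝ[X]} (hp : p ∈ truncatedModule k)
    (hq : q ∈ truncatedModule m) : p * q ∈ truncatedModule (k + m) := by
  have h := AddSubmonoid.mul_mem_mul hp hq
  rw [truncatedModule, truncatedModule, AddSubmonoid.closure_mul_closure] at h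
  refine AddSubmonoid.closure_mono ?_ h
  rintro _ ⟨a, ha, b, hb, rfl⟩
  exact weightedSquares_mul_mem ha hb

theorem sq_mem_truncatedModule {k : ℕ} {g : ℝ[X]} (hg : g.natDegree ≤ k) :
    g ^ 2 ∈ truncatedModule k :=
  AddSubmonoid.subset_closure (Or.inl ⟨g, hg, rfl⟩)

theorem C_mem_truncatedModule {c : ℝ} (hc : 0 ≤ c) (k : ℕ) : C c ∈ truncatedModule k := by
  have : C c = (C (√c)) ^ 2 := by rw [← C_pow, Real.sq_sqrt hc]
  rw [this]
  exact sq_mem_truncatedModule (by simp)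

theorem half_sq_add_weight_mem_truncatedModule {g : ℝ[X]} (hg : g.natDegree ≤ 1) :
    C (1 / 2) * (g ^ 2 + (1 - X ^ 2)) ∈ truncatedModule 1 := by
  have h := truncatedModule_mul_mem (C_mem_truncatedModule (c := 1 / 2) (by norm_num) 0)
    (add_mem (sq_mem_truncatedModule hg)
      (AddSubmonoid.subset_closure (Or.inr ⟨1, by simp, by ring⟩ :
        (1 - X ^ 2 : ℝ[X]) ∈ weightedSquares 1)))
  simpa using h

theorem one_sub_X_mem_truncatedModule : (1 - X : ℝ[X]) ∈ truncatedModule 1 := by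
  have h := half_sq_add_weight_mem_truncatedModule (g := 1 - X) (by compute_degree)
  have h2 : (C (1 / 2) : ℝ[X]) * 2 = 1 := by
    rw [show (2 : ℝ[X]) = C 2 from rfl, ← C_mul]; norm_num
  convert h using 1
  linear_combination (X - 1 : ℝ[X]) * h2

theorem one_add_X_mem_truncatedModule : (1 + X : ℝ[X]) ∈ truncatedModule 1 := by
  have h := half_sq_add_weight_mem_truncatedModule (g := 1 + X) (by compute_degree)
  have h2 : (C (1 / 2) : ℝ[X]) * 2 = 1 := by
    rw [show (2 : ℝ[X]) = C 2 from rfl, ← C_mul]; norm_num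
  convert h using 1
  linear_combination (-X - 1 : ℝ[X]) * h2

/-- A polynomial nonnegative on `[-1,1]` away from a single point is nonnegative on `[-1,1]`. -/
theorem eval_nonneg_of_punctured {r : ℝ[X]} {a : ℝ}
    (h : ∀ x ∈ Set.Icc (-1 : ℝ) 1, x ≠ a → 0 ≤ r.eval x) :
    ∀ x ∈ Set.Icc (-1 : ℝ) 1, 0 ≤ r.eval x := by
  intro x hx
  by_cases hxa : x = a
  · subst hxa
    have hacc : AccPt x (Filter.principal (Set.Icc (-1 : ℝ) 1)) :=
      isPreconnected_Icc.preperfect_of_nontrivial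
        ⟨-1, by simp, 1, by simp, by norm_num⟩ x hx
    have hcl := mem_closure_iff_clusterPt.2 (accPt_principal_iff_clusterPt.1 hacc)
    have hclosed : IsClosed {y : ℝ | 0 ≤ r.eval y} := isClosed_le continuous_const r.continuous
    exact closure_minimal (fun y hy => h y hy.1 hy.2) hclosed hcl
  · exact h x hx hxa

/-- A polynomial of degree at most `k` that is nonnegative on `[-1,1]` is a sum of weighted
squares of degree at most `2k`. -/
theorem mem_truncatedModule_of_nonneg (k : ℕ) :
    ∀ q : ℝ[X], q.natDegree ≤ k → (∀ x ∈ Set.Icc (-1 : ℝ) 1, 0 ≤ q.eval x) →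
      q ∈ truncatedModule k := by
  induction k using Nat.strong_induction_on with
  | _ k ih =>
  intro q hq hnonneg
  obtain ⟨a, ha, hmin⟩ := isCompact_Icc.exists_isMinOn (s := Set.Icc (-1 : ℝ) 1)
    (Set.nonempty_Icc.2 (by norm_num)) q.continuous.continuousOn
  have hmin' : ∀ x ∈ Set.Icc (-1 : ℝ) 1, q.eval a ≤ q.eval x := fun x hx => hmin hx
  suffices h : q - C (q.eval a) ∈ truncatedModule k by
    simpa using add_mem h (C_mem_truncatedModule (hnonneg a ha) k)
  obtain ⟨r, hr⟩ : X - C a ∣ q - C (q.eval a) := dvd_iff_isRoot.2 (by simp)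
  by_cases hr0 : r = 0
  · rw [hr, hr0, mul_zero]; exact zero_mem _
  have hdeg : r.natDegree + 1 ≤ k := by
    have h1 : (q - C (q.eval a)).natDegree ≤ k := by rwa [natDegree_sub_C]
    rw [hr, natDegree_mul (X_sub_C_ne_zero a) hr0, natDegree_X_sub_C] at h1
    omega
  have heval : ∀ x, q.eval x - q.eval a = (x - a) * r.eval x := fun x => by
    simpa using congrArg (eval x) hr
  have hprod : ∀ x ∈ Set.Icc (-1 : ℝ) 1, 0 ≤ (x - a) * r.eval x := fun x hx => by
    rw [← heval]; linarith [hmin' x hx]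
  rcases eq_or_lt_of_le ha.1 with h | hlo
  · have hmem := ih r.natDegree (by omega) r le_rfl (eval_nonneg_of_punctured (a := a)
      fun x hx hxa => nonneg_of_mul_nonneg_right (hprod x hx)
        (sub_pos.2 (lt_of_le_of_ne (h ▸ hx.1) (Ne.symm hxa))))
    have := truncatedModule_mul_mem one_add_X_mem_truncatedModule hmem
    rw [hr, ← h]
    refine truncatedModule_mono (by omega : 1 + r.natDegree ≤ k) ?_
    convert this using 2
    simp; ring
  rcases eq_or_lt_of_le ha.2 with h | hhi
  · have hmem := ih r.natDegree (by omega) (-r) (by simp) (eval_nonneg_of_punctured (a := a)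
      fun x hx hxa => by
        have hlt : x < a := lt_of_le_of_ne (h ▸ hx.2) hxa
        refine nonneg_of_mul_nonneg_right (a := a - x) ?_ (sub_pos.2 hlt)
        have := hprod x hx
        rw [eval_neg]; linarith)
    have := truncatedModule_mul_mem one_sub_X_mem_truncatedModule hmem
    rw [hr, h]
    refine truncatedModule_mono (by omega : 1 + r.natDegree ≤ k) ?_
    convert this using 1
    simp only [map_one]; ring
  · have hloc : IsLocalMin (fun x => q.eval x) a :=
      Filter.eventually_of_mem (Icc_mem_nhds hlo hhi) hmin'
    have hder : (derivative q).eval a = 0 := hloc.hasDerivAt_eq_zero (q.hasDerivAt a)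
    have hra : r.IsRoot a := by
      have := congrArg (fun s => eval a (derivative s)) hr
      simpa [hder] using this.symm
    obtain ⟨s, rfl⟩ := dvd_iff_isRoot.2 hra
    have hs0 : s ≠ 0 := right_ne_zero_of_mul hr0
    rw [natDegree_mul (X_sub_C_ne_zero a) hs0, natDegree_X_sub_C] at hdeg
    have hmem := ih s.natDegree (by omega) s le_rfl (eval_nonneg_of_punctured (a := a)
      fun x hx hxa => by
        refine nonneg_of_mul_nonneg_right (a := (x - a) ^ 2) ?_
          (by have := sub_ne_zero.2 hxa; positivity)
        have := hprod x hx
        simp only [eval_mul, eval_sub, eval_X, eval_C] at this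
        linarith)
    have := truncatedModule_mul_mem
      (sq_mem_truncatedModule (natDegree_X_sub_C a).le) hmem
    rw [hr]
    refine truncatedModule_mono (by omega : 1 + s.natDegree ≤ k) ?_
    convert this using 1
    ring

/-- The linear functional on polynomials sending `X ^ n` to `σ n`. -/
noncomputable def rieszFunctional (σ : ℕ → ℝ) : ℝ[X] →ₗ[ℝ] ℝ :=
  lsum fun n => σ n • LinearMap.id

theorem rieszFunctional_monomial (σ : ℕ → ℝ) (n : ℕ) (a : ℝ) :
    rieszFunctional σ (monomial n a) = a * σ n := by
  simp [rieszFunctional, lsum, sum_monomial_index, mul_comm]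

theorem rieszFunctional_eq_sum (σ : ℕ → ℝ) (N : ℕ) (g : ℝ[X]) (hg : g.natDegree < N) :
    rieszFunctional σ g = ∑ n : Fin N, g.coeff n * σ n := by
  conv_lhs => rw [g.as_sum_range' N hg]
  rw [map_sum, ← Fin.sum_univ_eq_sum_range
    (fun i => rieszFunctional σ (monomial i (g.coeff i)))]
  simp [rieszFunctional_monomial]

theorem rieszFunctional_mul (σ : ℕ → ℝ) (N : ℕ) (g h : ℝ[X]) (hg : g.natDegree < N)
    (hh : h.natDegree < N) :
    rieszFunctional σ (g * h) =
      ∑ m : Fin N, ∑ n : Fin N, g.coeff m * h.coeff n * σ (m + n) := by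
  conv_lhs => rw [g.as_sum_range' N hg, h.as_sum_range' N hh]
  simp only [Finset.sum_mul_sum, map_sum, monomial_mul_monomial, rieszFunctional_monomial,
    Finset.sum_range]

theorem rieszFunctional_X_sq_mul (σ : ℕ → ℝ) (g : ℝ[X]) :
    rieszFunctional σ (X ^ 2 * g) = rieszFunctional (fun n => σ (n + 2)) g := by
  induction g using Polynomial.induction_on' with
  | add p q hp hq => rw [mul_add, map_add, map_add, hp, hq]
  | monomial n a =>
    rw [X_pow_mul_monomial, rieszFunctional_monomial, rieszFunctional_monomial]

theorem rieszFunctional_sub_sequence (σ τ : ℕ → ℝ) (g : ℝ[X]) :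
    rieszFunctional (fun n => σ n - τ n) g = rieszFunctional σ g - rieszFunctional τ g := by
  rw [rieszFunctional_eq_sum _ _ g (Nat.lt_succ_self _),
    rieszFunctional_eq_sum _ _ g (Nat.lt_succ_self _),
    rieszFunctional_eq_sum _ _ g (Nat.lt_succ_self _), ← Finset.sum_sub_distrib]
  exact Finset.sum_congr rfl fun i _ => by ring

theorem rieszFunctional_sq_nonneg {N : ℕ} {σ : ℕ → ℝ}
    (hσ : (Matrix.of fun m n : Fin N => σ (m.1 + n.1)).PosSemidef) {g : ℝ[X]}
    (hg : g.natDegree < N) : 0 ≤ rieszFunctional σ (g ^ 2) := by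
  have h := hσ.dotProduct_mulVec_nonneg fun n => g.coeff n
  rw [sq, rieszFunctional_mul σ N g g hg hg]
  refine h.trans_eq ?_
  simp only [dotProduct, Matrix.mulVec, Finset.mul_sum, Matrix.of_apply, Pi.star_apply,
    star_trivial]
  exact Finset.sum_congr rfl fun m _ => Finset.sum_congr rfl fun n _ => by ring

theorem rieszFunctional_nonneg {d : ℕ} {σ : ℕ → ℝ} (h₁ : (momentMatrix d σ).PosSemidef)
    (h₂ : (locMomentMatrix d σ).PosSemidef) {q : ℝ[X]} (hq : q.natDegree ≤ d)
    (hnonneg : ∀ x ∈ Set.Icc (-1 : ℝ) 1, 0 ≤ q.eval x) : 0 ≤ rieszFunctional σ q := by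
  have hmem := mem_truncatedModule_of_nonneg d q hq hnonneg
  rw [truncatedModule] at hmem
  clear hq hnonneg
  induction hmem using AddSubmonoid.closure_induction with
  | mem x hx =>
    obtain ⟨g, hg, rfl⟩ | ⟨g, hg, rfl⟩ := hx
    · exact rieszFunctional_sq_nonneg h₁ (Nat.lt_succ_of_le hg)
    · rw [sub_mul, one_mul, map_sub, rieszFunctional_X_sq_mul, ← rieszFunctional_sub_sequence]
      exact rieszFunctional_sq_nonneg (σ := fun n => σ n - σ (n + 2)) h₂ hg
  | zero => simp
  | add x y _ _ hx hy => rw [map_add]; exact add_nonneg hx hy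

open CompactlySupported in
/-- The restriction to `[-1,1]` of polynomials of degree at most `d`. -/
noncomputable def restrictToIcc (d : ℕ) :
    degreeLE ℝ d →ₗ[ℝ] C_c(Set.Icc (-1 : ℝ) 1, ℝ) where
  toFun q :=
    { toFun := fun x => (q : ℝ[X]).eval (x : ℝ)
      continuous_toFun := (q : ℝ[X]).continuous.comp continuous_subtype_val
      hasCompactSupport' := HasCompactSupport.of_compactSpace _ }
  map_add' p q := by ext x; simp
  map_smul' c q := by ext x; simp

theorem restrictToIcc_injective (d : ℕ) : Function.Injective (restrictToIcc d) := by
  intro p q hpq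
  refine Subtype.ext (eq_of_infinite_eval_eq _ _ ?_)
  refine (Set.Icc_infinite (by norm_num : (-1 : ℝ) < 1)).mono fun x hx => ?_
  exact DFunLike.congr_fun hpq ⟨x, hx⟩

open CompactlySupported in
/-- The cone of nonnegative functions on `[-1,1]`. -/
def nonnegCone : PointedCone ℝ C_c(Set.Icc (-1 : ℝ) 1, ℝ) where
  carrier := {f | ∀ x, 0 ≤ f x}
  add_mem' hf hg x := add_nonneg (hf x) (hg x)
  zero_mem' _ := le_rfl
  smul_mem' c _ hf x := mul_nonneg c.2 (hf x)

open CompactlySupported in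
/-- Truncated Hausdorff moment problem: a sequence with PSD moment and localized moment matrices
agrees up to degree `d` with the moments of a finite measure on `[-1,1]`. -/
theorem exists_measure_moments_eq {d : ℕ} {σ : ℕ → ℝ} (h₁ : (momentMatrix d σ).PosSemidef)
    (h₂ : (locMomentMatrix d σ).PosSemidef) :
    ∃ ρ : FiniteMeasure ℝ, (ρ : Measure ℝ) (Set.Icc (-1 : ℝ) 1)ᶜ = 0 ∧
      ∀ k ≤ d, ∫ x, x ^ k ∂(ρ : Measure ℝ) = σ k := by
  let e := LinearEquiv.ofInjective (restrictToIcc d) (restrictToIcc_injective d)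
  let f : C_c(Set.Icc (-1 : ℝ) 1, ℝ) →ₗ.[ℝ] ℝ :=
    { domain := LinearMap.range (restrictToIcc d)
      toFun := (rieszFunctional σ ∘ₗ (degreeLE ℝ d).subtype) ∘ₗ e.symm.toLinearMap }
  have hf : ∀ q : degreeLE ℝ d, f (e q) = rieszFunctional σ q := fun q => by
    change rieszFunctional σ (e.symm (e q) : degreeLE ℝ d) = _
    rw [e.symm_apply_apply]
  obtain ⟨g, hgf, hg⟩ := riesz_extension nonnegCone f
    (by
      intro x hx
      obtain ⟨q, rfl⟩ := e.surjective x
      rw [hf]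
      exact rieszFunctional_nonneg h₁ h₂ (natDegree_le_iff_degree_le.2 (mem_degreeLE.1 q.2))
        fun x hx' => hx ⟨x, hx'⟩)
    (by
      intro y
      obtain ⟨M, hM⟩ := isCompact_univ.exists_bound_of_continuousOn
        (map_continuous y).continuousOn
      refine ⟨e ⟨C M, mem_degreeLE.2 (degree_C_le.trans (by simp))⟩, fun x => ?_⟩
      have := neg_le_of_abs_le (hM x trivial)
      have h : (0 : ℝ) ≤ eval (x : ℝ) (C M) + y x := by rw [eval_C]; linarith
      exact h)
  let Λ : C_c(Set.Icc (-1 : ℝ) 1, ℝ) →ₚ[ℝ] ℝ :=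
    PositiveLinearMap.mk₀ g fun x hx => hg x fun y => hx y
  have hΛ : ∀ q : degreeLE ℝ d,
      ∫ x, (q : ℝ[X]).eval (x : ℝ) ∂(RealRMK.rieszMeasure Λ) = rieszFunctional σ q := fun q =>
    (RealRMK.integral_rieszMeasure Λ (restrictToIcc d q)).trans ((hgf (e q)).trans (hf q))
  refine ⟨⟨(RealRMK.rieszMeasure Λ).map Subtype.val, inferInstance⟩, ?_, fun k hk => ?_⟩
  · rw [FiniteMeasure.toMeasure_mk,
      Measure.map_apply measurable_subtype_coe measurableSet_Icc.compl]
    simp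
  · rw [FiniteMeasure.toMeasure_mk,
      (MeasurableEmbedding.subtype_coe measurableSet_Icc).integral_map]
    have := hΛ ⟨X ^ k, mem_degreeLE.2 ((degree_X_pow_le k).trans (by exact_mod_cast hk))⟩
    simp only [eval_pow, eval_X] at this
    rw [this, ← monomial_one_right_eq_X_pow, rieszFunctional_monomial, one_mul]

theorem integrable_of_continuous_of_Icc {μ : Measure ℝ} [IsFiniteMeasure μ]
    (hμ : μ (Set.Icc (-1 : ℝ) 1)ᶜ = 0) {f : ℝ → ℝ} (hf : Continuous f) : Integrable f μ := by
  obtain ⟨M, hM⟩ := isCompact_Icc.exists_bound_of_continuousOn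
    (hf.continuousOn (s := Set.Icc (-1 : ℝ) 1))
  exact Integrable.of_bound hf.aestronglyMeasurable M
    (Filter.eventually_of_mem (mem_ae_iff.2 hμ) hM)

/-- Moments of a measure on `[-1,1]` weighted by a nonnegative function have a PSD Hankel matrix. -/
theorem hankel_posSemidef {μ : Measure ℝ} [IsFiniteMeasure μ]
    (hμ : μ (Set.Icc (-1 : ℝ) 1)ᶜ = 0) {w : ℝ → ℝ} (hw : Continuous w)
    (hw0 : ∀ x ∈ Set.Icc (-1 : ℝ) 1, 0 ≤ w x) (N : ℕ) :
    (Matrix.of fun m n : Fin N => ∫ x, w x * x ^ (m.1 + n.1) ∂μ).PosSemidef := by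
  refine .of_dotProduct_mulVec_nonneg ?_ fun v => ?_
  · ext m n
    simp [Matrix.conjTranspose_apply, add_comm]
  · have h : star v ⬝ᵥ ((Matrix.of fun m n : Fin N => ∫ x, w x * x ^ (m.1 + n.1) ∂μ).mulVec v) =
        ∫ x, w x * (∑ m, v m * x ^ m.1) ^ 2 ∂μ := by
      have hexp : ∀ x, w x * (∑ m, v m * x ^ m.1) ^ 2 =
          ∑ m, ∑ n, v m * v n * (w x * x ^ (m.1 + n.1)) := fun x => by
        rw [sq, Finset.sum_mul_sum, Finset.mul_sum]
        refine Finset.sum_congr rfl fun m _ => ?_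
        rw [Finset.mul_sum]
        exact Finset.sum_congr rfl fun n _ => by ring
      simp_rw [hexp]
      rw [integral_finsetSum _ fun m _ =>
        integrable_of_continuous_of_Icc hμ (by fun_prop)]
      simp only [dotProduct, Matrix.mulVec, Finset.mul_sum, Matrix.of_apply, Pi.star_apply,
        star_trivial]
      refine Finset.sum_congr rfl fun m _ => ?_
      rw [integral_finsetSum _ fun n _ =>
        integrable_of_continuous_of_Icc hμ (by fun_prop)]
      refine Finset.sum_congr rfl fun n _ => ?_
      rw [integral_const_mul]
      ring
    rw [h]
    refine integral_nonneg_of_ae ?_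
    filter_upwards [mem_ae_iff.2 hμ] with x hx
    exact mul_nonneg (hw0 x hx) (sq_nonneg _)

theorem momentMatrix_posSemidef {μ : Measure ℝ} [IsFiniteMeasure μ]
    (hμ : μ (Set.Icc (-1 : ℝ) 1)ᶜ = 0) (d : ℕ) :
    (momentMatrix d fun k => ∫ x, x ^ k ∂μ).PosSemidef := by
  convert hankel_posSemidef hμ (w := fun _ => 1) continuous_const (by simp) (d + 1) using 1
  ext m n
  simp [momentMatrix]

theorem locMomentMatrix_posSemidef {μ : Measure ℝ} [IsFiniteMeasure μ]
    (hμ : μ (Set.Icc (-1 : ℝ) 1)ᶜ = 0) (d : ℕ) :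
    (locMomentMatrix d fun k => ∫ x, x ^ k ∂μ).PosSemidef := by
  convert hankel_posSemidef hμ (w := fun x => 1 - x ^ 2) (by fun_prop)
    (fun x hx => by nlinarith [hx.1, hx.2]) d using 1
  ext m n
  rw [locMomentMatrix, Matrix.of_apply, ← integral_sub
    (integrable_of_continuous_of_Icc hμ (by fun_prop))
    (integrable_of_continuous_of_Icc hμ (by fun_prop))]
  congr 1 with x
  ring

theorem mass_cube_eq_one_iff {D L : ℕ} {ν : Fin L → Fin D → FiniteMeasure ℝ}
    (hsupp : ∀ l i, (ν l i : Measure ℝ) (Set.Icc (-1 : ℝ) 1)ᶜ = 0) :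
    (∑ l, Measure.pi fun i => (ν l i : Measure ℝ)) (cube D) = 1 ↔
      ∑ l, ∏ i, ∫ x, x ^ 0 ∂(ν l i : Measure ℝ) = 1 := by
  have hIcc : ∀ l i, (ν l i : Measure ℝ) (Set.Icc (-1 : ℝ) 1) =
      ((ν l i).mass : ENNReal) := fun l i => by
    rw [FiniteMeasure.ennreal_mass]
    exact measure_of_measure_compl_eq_zero (hsupp l i)
  have h1 : (∑ l, Measure.pi fun i => (ν l i : Measure ℝ)) (cube D) =
      ((∑ l, ∏ i, (ν l i).mass : NNReal) : ENNReal) := by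
    simp only [cube, Measure.finsetSum_apply, Measure.pi_pi, hIcc, ENNReal.ofNNReal_finsetSum,
      ENNReal.ofNNReal_finsetProd]
  have h2 : ∑ l, ∏ i, ∫ x, x ^ 0 ∂(ν l i : Measure ℝ) =
      ((∑ l, ∏ i, (ν l i).mass : NNReal) : ℝ) := by
    simp [Measure.real, ← FiniteMeasure.ennreal_mass]
  rw [h1, h2, ENNReal.coe_eq_one, NNReal.coe_eq_one]

theorem integral_eval_eq_objective {D L : ℕ} (p : MvPolynomial (Fin D) ℝ)
    {ν : Fin L → Fin D → FiniteMeasure ℝ}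
    (hsupp : ∀ l i, (ν l i : Measure ℝ) (Set.Icc (-1 : ℝ) 1)ᶜ = 0) :
    ∫ x, MvPolynomial.eval x p ∂(∑ l, Measure.pi fun i => (ν l i : Measure ℝ)) =
      objective D L p fun l i k => ∫ x, x ^ k ∂(ν l i : Measure ℝ) := by
  have hint : ∀ (n : Fin D →₀ ℕ) (l : Fin L), Integrable
      (fun x : Fin D → ℝ => p.coeff n * ∏ i, x i ^ n i)
      (Measure.pi fun i => (ν l i : Measure ℝ)) := fun n l =>
    (Integrable.fintype_prod_dep (f := fun i (y : ℝ) => y ^ n i) fun i =>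
      integrable_of_continuous_of_Icc (hsupp l i) (by fun_prop)).const_mul _
  simp_rw [MvPolynomial.eval_eq']
  rw [integral_finsetSum_measure fun l _ => integrable_finsetSum _ fun n _ => hint n l]
  simp_rw [integral_finsetSum _ fun n _ => hint n _]
  rw [Finset.sum_comm, objective]
  refine Finset.sum_congr rfl fun n _ => ?_
  rw [Finset.mul_sum]
  refine Finset.sum_congr rfl fun l _ => ?_
  rw [integral_const_mul, integral_fintype_prod_eq_prod (fun i (y : ℝ) => y ^ n i)]

theorem feasible_moments {D d L : ℕ} {ν : Fin L → Fin D → FiniteMeasure ℝ}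
    (hsupp : ∀ l i, (ν l i : Measure ℝ) (Set.Icc (-1 : ℝ) 1)ᶜ = 0)
    (hmass : (∑ l, Measure.pi fun i => (ν l i : Measure ℝ)) (cube D) = 1) :
    Feasible D d L fun l i k => ∫ x, x ^ k ∂(ν l i : Measure ℝ) :=
  ⟨fun l i => momentMatrix_posSemidef (hsupp l i) d,
    fun l i => locMomentMatrix_posSemidef (hsupp l i) d, (mass_cube_eq_one_iff hsupp).1 hmass⟩

theorem objective_congr {D d L : ℕ} {p : MvPolynomial (Fin D) ℝ} (hdeg : p.totalDegree ≤ d)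
    {σ τ : Fin L → Fin D → ℕ → ℝ} (h : ∀ l i, ∀ k ≤ d, σ l i k = τ l i k) :
    objective D L p σ = objective D L p τ := by
  refine Finset.sum_congr rfl fun n hn => ?_
  congr 1
  refine Finset.sum_congr rfl fun l _ => Finset.prod_congr rfl fun i _ => h l i _ ?_
  exact (MvPolynomial.monomial_le_degreeOf i hn).trans
    ((MvPolynomial.degreeOf_le_totalDegree p i).trans hdeg)

/-- Corollary A.8, point 2: `ν = Σ_l ν_1^{(l)} ⊗ ⋯ ⊗ ν_D^{(l)} ∈ S_L` attains the
infimum of `∫ p dρ` over `ρ ∈ S_L` if and only if its tuple of moments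
`μ_{i,k}^{(l)} = ∫ x^k dν_i^{(l)}` attains the infimum of the objective `f` over the
feasible set `F_L`. -/
theorem statement7 (D d L : ℕ) (hD : 1 ≤ D) (hd : 1 ≤ d) (hL : 1 ≤ L)
    (p : MvPolynomial (Fin D) ℝ) (hdeg : p.totalDegree ≤ d)
    (ν : Fin L → Fin D → FiniteMeasure ℝ)
    (hsupp : ∀ l i, (ν l i : Measure ℝ) (Set.Icc (-1 : ℝ) 1)ᶜ = 0)
    (hmass : (∑ l, Measure.pi fun i => (ν l i : Measure ℝ)) (cube D) = 1) :
    (∀ ρ : Fin L → Fin D → FiniteMeasure ℝ,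
        (∀ l i, (ρ l i : Measure ℝ) (Set.Icc (-1 : ℝ) 1)ᶜ = 0) →
        (∑ l, Measure.pi fun i => (ρ l i : Measure ℝ)) (cube D) = 1 →
        ∫ x, MvPolynomial.eval x p ∂(∑ l, Measure.pi fun i => (ν l i : Measure ℝ)) ≤
          ∫ x, MvPolynomial.eval x p ∂(∑ l, Measure.pi fun i => (ρ l i : Measure ℝ))) ↔
    (Feasible D d L (fun l i k => ∫ x, x ^ k ∂(ν l i : Measure ℝ)) ∧
      ∀ σ : Fin L → Fin D → ℕ → ℝ, Feasible D d L σ →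
        objective D L p (fun l i k => ∫ x, x ^ k ∂(ν l i : Measure ℝ)) ≤
          objective D L p σ) := by
  constructor
  · intro h
    refine ⟨feasible_moments hsupp hmass, fun σ hσ => ?_⟩
    choose ρ hρ hmom using fun l i => exists_measure_moments_eq (hσ.1 l i) (hσ.2.1 l i)
    have hρmass := (mass_cube_eq_one_iff hρ).2 (by simpa only [hmom _ _ 0 d.zero_le] using hσ.2.2)
    rw [← integral_eval_eq_objective p hsupp, ← objective_congr hdeg hmom,
      ← integral_eval_eq_objective p hρ]
    exact h ρ hρ hρmass
  · rintro ⟨-, h⟩ ρ hρ hρmass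
    rw [integral_eval_eq_objective p hsupp, integral_eval_eq_objective p hρ]
    exact h _ (feasible_moments hρ hρmass)
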